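/- Suppose ∫_{(0,1)} ξ ln(1/ξ) ν(dξ) < ∞ and ∫_{(1,∞)} ν(dξ) < ∞. Then for every t > 0 the function u ↦ exp(∫₀^t ∫_{(0,∞)} (exp(ξ u e^{-as}/(1 - (σ²/(2a))(1-e^{-as})u)) - 1) ν(dξ) ds), defined for Re u ≤ 0, equals exp(λ(ρ̂(u) - 1)) for some finite λ ≥ 0 and some probability measure ρ on [0,∞) with transform ρ̂(u) = ∫ e^{ux} ρ(dx); in particular it is the transform of a compound Poisson distribution, which assigns positive mass to {0} (equal to e^{-λ}). -/

import Mathlib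

open MeasureTheory ENNReal

lemma gam_int (n : ℕ) (z : ℂ) (hz : 0 < z.re) :
    IntegrableOn (fun x : ℝ => (x : ℂ) ^ n * Complex.exp (-z * x)) (Set.Ioi 0) := by
  have h := integrableOn_rpow_mul_exp_neg_mul_rpow (p := 1) (s := n) (b := z.re)
    (by have : (0:ℝ) ≤ n := n.cast_nonneg
        linarith) one_pos hz
  refine Integrable.mono' h (by fun_prop) ?_
  refine (ae_restrict_mem measurableSet_Ioi).mono fun x hx => ?_
  have hx : 0 < x := hx
  simp [Complex.norm_exp, abs_of_pos hx]

lemma gam_tendsto (n : ℕ) (z : ℂ) (hz : 0 < z.re) :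
    Filter.Tendsto (fun x : ℝ => (x : ℂ) ^ n * Complex.exp (-z * x)) Filter.atTop (nhds 0) := by
  rw [tendsto_zero_iff_norm_tendsto_zero]
  have h := tendsto_rpow_mul_exp_neg_mul_atTop_nhds_zero n z.re hz
  refine h.congr' ?_
  filter_upwards [Filter.eventually_gt_atTop 0] with x hx
  simp [Complex.norm_exp, abs_of_pos hx]

lemma gam_val (n : ℕ) (z : ℂ) (hz : 0 < z.re) :
    ∫ x in Set.Ioi (0:ℝ), (x : ℂ) ^ n * Complex.exp (-z * x) = n.factorial / z ^ (n + 1) := by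
  have hz0 : z ≠ 0 := by
    rintro rfl
    simp at hz
  induction n with
  | zero =>
    have := integral_exp_mul_complex_Ioi (a := -z) (by simpa using hz) 0
    simp at this ⊢
    rw [this]
  | succ n ih =>
    have hd : ∀ x ∈ Set.Ici (0:ℝ), HasDerivAt
        (fun x : ℝ => (x : ℂ) ^ (n + 1) * Complex.exp (-z * x))
        ((n + 1) * ((x : ℂ) ^ n * Complex.exp (-z * x))
          - z * ((x : ℂ) ^ (n + 1) * Complex.exp (-z * x))) x := by
      intro x _
      have h : HasDerivAt (fun w : ℂ => w ^ (n + 1) * Complex.exp (-z * w))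
        ((n + 1) * ((x : ℂ) ^ n * Complex.exp (-z * x))
          - z * ((x : ℂ) ^ (n + 1) * Complex.exp (-z * x))) (x : ℂ) := by
        have h1 := (hasDerivAt_pow (n + 1) (x : ℂ))
        have h2 := ((hasDerivAt_id (x : ℂ)).const_mul (-z)).cexp
        have h3 := h1.mul h2
        refine h3.congr_deriv ?_
        simp
        ring
      exact h.comp_ofReal
    have i1 := (gam_int n z hz).const_mul ((n : ℂ) + 1)
    have i2 := (gam_int (n + 1) z hz).const_mul z
    have key := integral_Ioi_of_hasDerivAt_of_tendsto' hd (i1.sub i2) (gam_tendsto (n + 1) z hz)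
    rw [integral_sub i1 i2, integral_const_mul, integral_const_mul, ih] at key
    simp at key
    have : z * ∫ x in Set.Ioi (0:ℝ), (x : ℂ) ^ (n + 1) * Complex.exp (-z * x)
      = (n + 1) * (n.factorial / z ^ (n + 1)) := by
      simp only [neg_mul]
      linear_combination -key
    rw [_root_.eq_div_iff (pow_ne_zero _ hz0), Nat.factorial_succ]
    field_simp at this ⊢
    push_cast
    linear_combination this

/-- convolution powers -/
noncomputable def cpw (ρ : Measure ℝ) : ℕ → Measure ℝ
  | 0 => Measure.dirac 0
  | n + 1 => (cpw ρ n).conv ρ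

lemma int_exp (μ : Measure ℝ) [IsFiniteMeasure μ] (h : μ (Set.Iio 0) = 0) (u : ℂ) (hu : u.re ≤ 0) :
    Integrable (fun x : ℝ => Complex.exp (u * x)) μ := by
  refine Integrable.mono' (integrable_const (1:ℝ)) (by fun_prop) ?_
  have : ∀ᵐ x ∂μ, 0 ≤ x := by
    rw [ae_iff]
    convert h using 2
    ext; simp
  filter_upwards [this] with x hx
  simp [Complex.norm_exp]
  nlinarith

lemma cpw_prop (ρ : Measure ℝ) [IsProbabilityMeasure ρ] (h : ρ (Set.Iio 0) = 0) (n : ℕ) :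
    IsProbabilityMeasure (cpw ρ n) ∧ (cpw ρ n) (Set.Iio 0) = 0 ∧
    ∀ u : ℂ, u.re ≤ 0 → ∫ x : ℝ, Complex.exp (u * x) ∂(cpw ρ n)
      = (∫ x : ℝ, Complex.exp (u * x) ∂ρ) ^ n := by
  induction n with
  | zero =>
    refine ⟨by unfold cpw; infer_instance, by simp [cpw], fun u hu => by simp [cpw]⟩
  | succ n ih =>
    obtain ⟨hp, h0, hI⟩ := ih
    have hp' : IsProbabilityMeasure (cpw ρ (n + 1)) := by
      unfold cpw; infer_instance
    have h0' : (cpw ρ (n + 1)) (Set.Iio 0) = 0 := by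
      have : ∀ᵐ x ∂(cpw ρ (n + 1)), 0 ≤ x := by
        unfold cpw Measure.conv
        rw [ae_map_iff (by fun_prop) measurableSet_Ici]
        have a1 : ∀ᵐ x ∂(cpw ρ n), 0 ≤ x := by
          rw [ae_iff]; convert h0 using 2; ext; simp
        have a2 : ∀ᵐ x ∂ρ, 0 ≤ x := by
          rw [ae_iff]; convert h using 2; ext; simp
        have b1 := Measure.quasiMeasurePreserving_fst (μ := cpw ρ n) (ν := ρ) |>.ae a1
        have b2 := Measure.quasiMeasurePreserving_snd (μ := cpw ρ n) (ν := ρ) |>.ae a2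
        filter_upwards [b1, b2] with p h1 h2
        exact add_nonneg h1 h2
      rw [ae_iff] at this
      convert this using 2; ext; simp
    refine ⟨hp', h0', fun u hu => ?_⟩
    have hi := int_exp _ h0' u hu
    unfold cpw at hi ⊢
    rw [integral_conv hi, pow_succ, ← hI u hu, ← integral_mul_const]
    congr 1
    ext x
    rw [← integral_const_mul]
    congr 1
    ext y
    rw [← Complex.exp_add]
    push_cast
    ring_nf

lemma cp_exists (lam : ℝ) (hl : 0 ≤ lam) (ρ : Measure ℝ) [IsProbabilityMeasure ρ]
    (h : ρ (Set.Iio 0) = 0) :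
    ∃ μcp : Measure ℝ, IsProbabilityMeasure μcp ∧
        (∀ u : ℂ, u.re ≤ 0 →
          ∫ x : ℝ, Complex.exp (u * x) ∂μcp =
            Complex.exp ((lam : ℂ) * ((∫ x : ℝ, Complex.exp (u * x) ∂ρ) - 1))) ∧
        μcp {0} ≥ ENNReal.ofReal (Real.exp (-lam)) := by
  let c : ℕ → ℝ := fun n => Real.exp (-lam) * (lam ^ n / n.factorial)
  have hc : ∀ n, 0 ≤ c n := fun n => by positivity
  have hcs : HasSum c 1 := by
    have := (NormedSpace.expSeries_div_hasSum_exp lam).mul_left (Real.exp (-lam))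
    rwa [← Real.exp_eq_exp_ℝ, ← Real.exp_add, neg_add_cancel, Real.exp_zero] at this
  let m : ℕ → Measure ℝ := fun n => ENNReal.ofReal (c n) • cpw ρ n
  have hP : IsProbabilityMeasure (Measure.sum m) := by
    constructor
    rw [Measure.sum_apply _ MeasurableSet.univ]
    have : ∀ n, m n Set.univ = ENNReal.ofReal (c n) := fun n => by
      have := (cpw_prop ρ h n).1
      simp [m]
    simp_rw [this]
    rw [← ENNReal.ofReal_tsum_of_nonneg hc hcs.summable, hcs.tsum_eq, ENNReal.ofReal_one]
  have hS : (Measure.sum m) (Set.Iio 0) = 0 := by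
    rw [Measure.sum_apply _ measurableSet_Iio]
    simp [m, (cpw_prop ρ h _).2.1]
  refine ⟨Measure.sum m, hP, fun u hu => ?_, ?_⟩
  · have := hasSum_integral_measure (int_exp _ hS u hu)
    refine this.unique ?_
    have e : ∀ n, ∫ x : ℝ, Complex.exp (u * x) ∂(m n) =
      Complex.exp (-lam) * ((lam * ∫ x : ℝ, Complex.exp (u * x) ∂ρ) ^ n / n.factorial) := by
      intro n
      simp only [m]
      rw [integral_smul_measure, (cpw_prop ρ h n).2.2 u hu, ENNReal.toReal_ofReal (hc n)]
      simp [c]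
      ring
    simp_rw [e]
    have := (NormedSpace.expSeries_div_hasSum_exp
      (lam * ∫ x : ℝ, Complex.exp (u * x) ∂ρ)).mul_left (Complex.exp (-lam))
    rw [← Complex.exp_eq_exp_ℂ, ← Complex.exp_add] at this
    rw [show (lam : ℂ) * ((∫ x : ℝ, Complex.exp (u * x) ∂ρ) - 1)
      = -lam + lam * ∫ x : ℝ, Complex.exp (u * x) ∂ρ by ring]
    exact this
  · refine le_trans ?_ (Measure.le_sum_apply m {0} |>.trans' (ENNReal.le_tsum 0))
    simp [m, c, cpw]

/-- joint density of the Bessel jump part -/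
noncomputable def bD (α β : ℝ) (q : ℕ × ℝ) : ℝ :=
  Real.exp (-α) * (α ^ (q.1 + 1) / (q.1 + 1).factorial) *
    (β ^ (q.1 + 1) / q.1.factorial * (q.2 ^ q.1 * Real.exp (-β * q.2)))

/-- reference measure -/
noncomputable def bQ : Measure (ℕ × ℝ) :=
  (Measure.count : Measure ℕ).prod (volume.restrict (Set.Ioi (0:ℝ)))

instance bQ_sf : SFinite bQ := by unfold bQ; infer_instance

lemma bQ_pos : ∀ᵐ q ∂bQ, 0 < q.2 :=
  (Measure.quasiMeasurePreserving_snd (μ := (Measure.count : Measure ℕ))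
    (ν := volume.restrict (Set.Ioi (0:ℝ)))).ae (ae_restrict_mem measurableSet_Ioi)

lemma bD_meas_joint {X : Type*} [MeasurableSpace X] {f g : X → ℝ} (hf : Measurable f)
    (hg : Measurable g) : Measurable (fun p : X × (ℕ × ℝ) => bD (f p.1) (g p.1) p.2) := by
  have h1 : Measurable (fun p : X × (ℕ × ℝ) => ((p.2.1 + 1).factorial : ℝ)) :=
    (measurable_of_countable (fun n : ℕ => ((n + 1).factorial : ℝ))).comp
      (measurable_fst.comp measurable_snd)
  have h2 : Measurable (fun p : X × (ℕ × ℝ) => (p.2.1.factorial : ℝ)) :=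
    (measurable_of_countable (fun n : ℕ => (n.factorial : ℝ))).comp
      (measurable_fst.comp measurable_snd)
  unfold bD
  fun_prop

lemma bD_meas (α β : ℝ) : Measurable (bD α β) := by
  have := bD_meas_joint (X := Unit) (f := fun _ => α) (g := fun _ => β)
    measurable_const measurable_const
  exact this.comp (measurable_prodMk_left (x := ()))

lemma bD_nonneg {α β : ℝ} (hα : 0 ≤ α) (hβ : 0 < β) {q : ℕ × ℝ} (hq : 0 < q.2) :
    0 ≤ bD α β q := by
  unfold bD; positivity

lemma bsum (α : ℝ) (w : ℂ) : HasSum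
    (fun n : ℕ => Complex.exp (-α) * ((α : ℂ) ^ (n + 1) / (n + 1).factorial) * w ^ (n + 1))
    (Complex.exp (α * w - α) - Complex.exp (-α)) := by
  have h := (NormedSpace.expSeries_div_hasSum_exp ((α : ℂ) * w))
  rw [← Complex.exp_eq_exp_ℂ] at h
  have h2 := ((hasSum_nat_add_iff' 1).mpr h).mul_left (Complex.exp (-α))
  simp only [Finset.sum_range_one, pow_zero, Nat.factorial_zero, Nat.cast_one, div_one] at h2
  have e : Complex.exp (-α) * (Complex.exp (α * w) - 1)
      = Complex.exp (α * w - α) - Complex.exp (-α) := by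
    rw [sub_eq_add_neg (α * w : ℂ), Complex.exp_add]; ring
  rw [← e]
  refine h2.congr_fun ?_
  intro n
  rw [mul_pow]; ring

lemma binner (α β : ℝ) (hβ : 0 < β) (u : ℂ) (hu : u.re ≤ 0) (n : ℕ) :
    IntegrableOn (fun x : ℝ => (bD α β (n, x) : ℂ) * Complex.exp (u * x)) (Set.Ioi 0) ∧
    ∫ x in Set.Ioi (0:ℝ), (bD α β (n, x) : ℂ) * Complex.exp (u * x) =
      Complex.exp (-α) * ((α : ℂ) ^ (n + 1) / (n + 1).factorial) * (β / (β - u)) ^ (n + 1) := by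
  have hz : 0 < ((β : ℂ) - u).re := by simp; linarith
  have e : (fun x : ℝ => (bD α β (n, x) : ℂ) * Complex.exp (u * x)) = fun x : ℝ =>
     (Complex.exp (-α) * ((α : ℂ) ^ (n + 1) / (n + 1).factorial) * (β ^ (n + 1) / n.factorial))
      * ((x : ℂ) ^ n * Complex.exp (-(β - u) * x)) := by
    ext x
    have : Complex.exp (-(β - u) * x) = Complex.exp (-β * x) * Complex.exp (u * x) := by
      rw [← Complex.exp_add]; ring_nf
    rw [this]
    simp only [bD]
    push_cast
    ring
  rw [e]
  refine ⟨(gam_int n _ hz).const_mul _, ?_⟩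
  rw [integral_const_mul, gam_val n _ hz]
  have : (n.factorial : ℂ) ≠ 0 := by exact_mod_cast n.factorial_ne_zero
  rw [div_pow]
  field_simp

lemma bmass (α β : ℝ) (hα : 0 ≤ α) (hβ : 0 < β) :
    ∫⁻ q, ENNReal.ofReal (bD α β q) ∂bQ = ENNReal.ofReal (1 - Real.exp (-α)) := by
  have hm := bD_meas α β
  unfold bQ
  rw [lintegral_prod _ (by fun_prop), lintegral_count]
  have hβ' : (β : ℂ) ≠ 0 := by exact_mod_cast hβ.ne'
  have e : ∀ n : ℕ, ∫⁻ x in Set.Ioi (0:ℝ), ENNReal.ofReal (bD α β (n, x)) =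
      ENNReal.ofReal (Real.exp (-α) * (α ^ (n + 1) / (n + 1).factorial)) := by
    intro n
    obtain ⟨h1, h2⟩ := binner α β hβ 0 (by simp) n
    simp only [zero_mul, Complex.exp_zero, mul_one, sub_zero, div_self hβ', one_pow] at h1 h2
    rw [← ofReal_integral_eq_lintegral_ofReal]
    · congr 1
      rw [integral_complex_ofReal] at h2
      exact_mod_cast h2
    · simpa using Integrable.re h1
    · exact (ae_restrict_mem measurableSet_Ioi).mono fun x hx => bD_nonneg hα hβ hx
  simp_rw [e]
  have hs : HasSum (fun n : ℕ => Real.exp (-α) * (α ^ (n + 1) / (n + 1).factorial))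
      (1 - Real.exp (-α)) := by
    have := bsum α 1
    simp only [one_pow, mul_one, sub_self, Complex.exp_zero] at this
    exact_mod_cast this
  rw [← ENNReal.ofReal_tsum_of_nonneg (fun n => by positivity) hs.summable, hs.tsum_eq]

lemma bint (α β : ℝ) (hα : 0 ≤ α) (hβ : 0 < β) (u : ℂ) (hu : u.re ≤ 0) :
    ∫ q, (bD α β q : ℂ) * Complex.exp (u * q.2) ∂bQ =
      Complex.exp (α * u / (β - u)) - Complex.exp (-α) := by
  have hm := bD_meas α β
  have hz : (β : ℂ) - u ≠ 0 := by
    intro h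
    have := congrArg Complex.re h
    simp at this; linarith
  have hD : Integrable (bD α β) bQ := by
    refine ⟨hm.aestronglyMeasurable, ?_⟩
    rw [hasFiniteIntegral_iff_ofReal (bQ_pos.mono fun q hq => bD_nonneg hα hβ hq), bmass α β hα hβ]
    exact ENNReal.ofReal_lt_top
  have hI : Integrable (fun q : ℕ × ℝ => (bD α β q : ℂ) * Complex.exp (u * q.2)) bQ := by
    refine hD.mono (by fun_prop) ?_
    filter_upwards [bQ_pos] with q hq
    rw [norm_mul, Complex.norm_real]
    refine mul_le_of_le_one_right (norm_nonneg _) ?_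
    simp [Complex.norm_exp]
    nlinarith
  unfold bQ at hI ⊢
  rw [integral_prod _ hI, integral_countable hI.integral_prod_left]
  simp only [(binner α β hβ u hu _).2]
  simp
  rw [(bsum α _).tsum_eq]
  congr 2
  field_simp
  ring

/-- weight -/
noncomputable def wt (ξ : ℝ) : ℝ≥0∞ :=
  if ξ < 1 / 2 then ENNReal.ofReal (ξ * Real.log (1 / ξ)) else 1

lemma wt_meas : Measurable wt :=
  Measurable.ite measurableSet_Iio (by fun_prop) measurable_const

noncomputable def aP (a σ : ℝ) (p : ℝ × ℝ) : ℝ := 2 * a * p.2 / (σ ^ 2 * (Real.exp (a * p.1) - 1))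

noncomputable def bP (a σ : ℝ) (p : ℝ × ℝ) : ℝ :=
  2 * a * Real.exp (a * p.1) / (σ ^ 2 * (Real.exp (a * p.1) - 1))

lemma aP_meas (a σ : ℝ) : Measurable (aP a σ) := by unfold aP; fun_prop

lemma bP_meas (a σ : ℝ) : Measurable (bP a σ) := by unfold bP; fun_prop

lemma ex_pos {a s : ℝ} (ha : 0 < a) (hs : 0 < s) : 0 < Real.exp (a * s) - 1 := by
  have := Real.add_one_lt_exp (mul_pos ha hs).ne'
  have := mul_pos ha hs
  linarith

lemma aP_pos {a σ : ℝ} (ha : 0 < a) (hσ : 0 < σ) {s ξ : ℝ} (hs : 0 < s) (hξ : 0 < ξ) :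
    0 < aP a σ (s, ξ) := by
  have := ex_pos ha hs
  unfold aP; positivity

lemma bP_pos {a σ : ℝ} (ha : 0 < a) (hσ : 0 < σ) {s ξ : ℝ} (hs : 0 < s) :
    0 < bP a σ (s, ξ) := by
  have := ex_pos ha hs
  unfold bP; positivity

lemma aP_le {a σ : ℝ} (ha : 0 < a) (hσ : 0 < σ) {s ξ : ℝ} (hs : 0 < s) (hξ : 0 < ξ) :
    aP a σ (s, ξ) ≤ 2 / σ ^ 2 * ξ * s⁻¹ := by
  have h1 := Real.add_one_le_exp (a * s)
  unfold aP
  calc 2 * a * ξ / (σ ^ 2 * (Real.exp (a * s) - 1)) ≤ 2 * a * ξ / (σ ^ 2 * (a * s)) := by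
        gcongr; linarith
    _ = _ := by field_simp

lemma est (a σ : ℝ) (ha : 0 < a) (hσ : 0 < σ) (t : ℝ) (ht : 0 < t) :
    ∃ K : ℝ, ∀ ξ : ℝ, 0 < ξ →
      ∫⁻ s in Set.Ioo 0 t, ENNReal.ofReal (1 - Real.exp (-aP a σ (s, ξ)))
        ≤ ENNReal.ofReal K * wt ξ := by
  have hl2 : 0 < Real.log 2 := Real.log_pos one_lt_two
  set C := 2 / σ ^ 2 with hC
  have hCp : 0 < C := by positivity
  refine ⟨t + (1 / Real.log 2 + C * (|Real.log t| / Real.log 2 + 1)), fun ξ hξ => ?_⟩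
  have hone : ∀ s, ENNReal.ofReal (1 - Real.exp (-aP a σ (s, ξ))) ≤ 1 := fun s => by
    rw [← ENNReal.ofReal_one]
    exact ENNReal.ofReal_le_ofReal (by linarith [Real.exp_pos (-aP a σ (s, ξ))])
  unfold wt
  split_ifs with h
  · have hlog : Real.log 2 ≤ Real.log (1 / ξ) := by
      apply Real.log_le_log two_pos
      rw [le_div_iff₀ hξ]; linarith
    set L := Real.log (1 / ξ) with hL
    have hsub : Set.Ioo 0 t ⊆ Set.Ioc 0 ξ ∪ Set.Ioc ξ (max t ξ) := by
      intro s hs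
      rcases le_or_gt s ξ with h1 | h1
      · exact Or.inl ⟨hs.1, h1⟩
      · exact Or.inr ⟨h1, le_max_of_le_left hs.2.le⟩
    have p1 : ∫⁻ s in Set.Ioc 0 ξ, ENNReal.ofReal (1 - Real.exp (-aP a σ (s, ξ)))
        ≤ ENNReal.ofReal ξ := by
      calc _ ≤ ∫⁻ s in Set.Ioc 0 ξ, 1 := lintegral_mono fun s => hone s
        _ = _ := by simp
    have hmx : ξ ≤ max t ξ := le_max_right _ _
    have hint : IntervalIntegrable (fun s : ℝ => C * ξ * s⁻¹) volume ξ (max t ξ) := by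
      apply ContinuousOn.intervalIntegrable
      rw [Set.uIcc_of_le hmx]
      intro s hs
      have : s ≠ 0 := (hξ.trans_le hs.1).ne'
      exact (continuousAt_const.mul (continuousAt_inv₀ this)).continuousWithinAt
    have p2 : ∫⁻ s in Set.Ioc ξ (max t ξ), ENNReal.ofReal (1 - Real.exp (-aP a σ (s, ξ)))
        ≤ ENNReal.ofReal (C * ξ * (|Real.log t| + L)) := by
      calc _ ≤ ∫⁻ s in Set.Ioc ξ (max t ξ), ENNReal.ofReal (C * ξ * s⁻¹) := by
            refine setLIntegral_mono' measurableSet_Ioc fun s hs => ENNReal.ofReal_le_ofReal ?_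
            have h1 := aP_le ha hσ (hξ.trans hs.1) hξ
            have h2 := Real.add_one_le_exp (-aP a σ (s, ξ))
            linarith
        _ = ENNReal.ofReal (∫ s in ξ..(max t ξ), C * ξ * s⁻¹) := by
            rw [intervalIntegral.integral_of_le hmx, ofReal_integral_eq_lintegral_ofReal]
            · exact hint.1
            · refine (ae_restrict_mem measurableSet_Ioc).mono fun s hs => ?_
              have : 0 < s := hξ.trans hs.1
              show 0 ≤ C * ξ * s⁻¹
              positivity
        _ ≤ _ := by
            apply ENNReal.ofReal_le_ofReal
            rw [intervalIntegral.integral_const_mul,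
              integral_inv_of_pos hξ (hξ.trans_le hmx)]
            gcongr
            rw [div_eq_mul_one_div, Real.log_mul (hξ.trans_le hmx).ne' (by positivity)]
            gcongr
            rcases max_cases t ξ with ⟨h1, _⟩ | ⟨h1, _⟩
            · rw [h1]; exact le_abs_self _
            · rw [h1]
              exact (Real.log_nonpos hξ.le (by linarith)).trans (abs_nonneg _)
    calc _ ≤ ∫⁻ s in Set.Ioc 0 ξ ∪ Set.Ioc ξ (max t ξ),
            ENNReal.ofReal (1 - Real.exp (-aP a σ (s, ξ))) := lintegral_mono_set hsub
      _ ≤ _ := lintegral_union_le _ _ _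
      _ ≤ ENNReal.ofReal ξ + ENNReal.ofReal (C * ξ * (|Real.log t| + L)) := add_le_add p1 p2
      _ = ENNReal.ofReal (ξ + C * ξ * (|Real.log t| + L)) :=
          (ENNReal.ofReal_add (by positivity) (by
            have : 0 ≤ L := by linarith
            positivity)).symm
      _ ≤ _ := by
          rw [← ENNReal.ofReal_mul (by positivity)]
          apply ENNReal.ofReal_le_ofReal
          have q : 1 ≤ L / Real.log 2 := by rwa [one_le_div hl2]
          have hLp : 0 < L := by linarith
          have e1 : ξ * 1 ≤ ξ * (L / Real.log 2) := by gcongr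
          have e2 : C * ξ * (|Real.log t| * 1) ≤ C * ξ * (|Real.log t| * (L / Real.log 2)) := by
            gcongr
          have e3 : 0 ≤ t * (ξ * L) := by positivity
          have : (t + (1 / Real.log 2 + C * (|Real.log t| / Real.log 2 + 1))) * (ξ * L)
            = t * (ξ * L) + ξ * (L / Real.log 2) + C * ξ * (|Real.log t| * (L / Real.log 2))
              + C * ξ * L := by ring
          rw [this]
          linarith
  · rw [mul_one]
    calc _ ≤ ∫⁻ s in Set.Ioo 0 t, 1 := lintegral_mono fun s => hone s
      _ = ENNReal.ofReal t := by simp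
      _ ≤ _ := ENNReal.ofReal_le_ofReal (by
        have : 0 ≤ 1 / Real.log 2 + C * (|Real.log t| / Real.log 2 + 1) := by positivity
        linarith)

lemma wt_fin (ν : Measure ℝ)
    (hν1 : ∫⁻ ξ in Set.Ioo (0 : ℝ) 1, ENNReal.ofReal (ξ * Real.log (1 / ξ)) ∂ν < ⊤)
    (h2 : ν (Set.Ici (1 / 2 : ℝ)) < ⊤) :
    ∫⁻ ξ in Set.Ioi (0:ℝ), wt ξ ∂ν < ⊤ := by
  have hsub : Set.Ioi (0:ℝ) ⊆ Set.Ioo 0 (1 / 2) ∪ Set.Ici (1 / 2) := by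
    intro x hx
    rcases lt_or_ge x (1 / 2) with h | h
    · exact Or.inl ⟨hx, h⟩
    · exact Or.inr h
  refine (lintegral_mono_set hsub).trans_lt ((lintegral_union_le _ _ _).trans_lt ?_)
  refine ENNReal.add_lt_top.mpr ⟨?_, ?_⟩
  · refine lt_of_le_of_lt ?_ hν1
    rw [setLIntegral_congr_fun (g := fun ξ => ENNReal.ofReal (ξ * Real.log (1 / ξ)))
      measurableSet_Ioo (fun x hx => by simp only [wt, if_pos hx.2])]
    exact lintegral_mono_set (Set.Ioo_subset_Ioo_right (by norm_num))
  · rw [setLIntegral_congr_fun (g := fun _ => 1)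
      measurableSet_Ici (fun x hx => by simp only [wt, if_neg (not_lt.mpr (Set.mem_Ici.mp hx))])]
    simpa using h2

lemma sf (ν : Measure ℝ) (h : ∫⁻ ξ in Set.Ioi (0:ℝ), wt ξ ∂ν < ⊤) :
    SFinite (ν.restrict (Set.Ioi 0)) := by
  have hf : IsFiniteMeasure ((ν.restrict (Set.Ioi 0)).withDensity wt) :=
    isFiniteMeasure_withDensity h.ne
  rw [← withDensity_inv_same (μ := ν.restrict (Set.Ioi 0)) wt_meas]
  · infer_instance
  · refine (ae_restrict_mem measurableSet_Ioi).mono fun x hx => ?_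
    have hx : 0 < x := hx
    unfold wt
    split_ifs with h
    · have : 0 < Real.log (1 / x) := Real.log_pos (by rw [lt_div_iff₀ hx]; linarith)
      simp only [ne_eq, ENNReal.ofReal_eq_zero, not_le]
      positivity
    · simp
  · refine Filter.Eventually.of_forall fun x => ?_
    unfold wt
    split_ifs <;> simp

lemma expo (a σ : ℝ) (ha : 0 < a) (hσ : 0 < σ) {s ξ : ℝ} (hs : 0 < s) (u : ℂ) (hu : u.re ≤ 0) :
    (ξ : ℂ) * u * Complex.exp (-(a : ℂ) * s) /
      (1 - ((σ : ℂ)^2 / (2 * a)) * (1 - Complex.exp (-(a : ℂ) * s)) * u)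
    = (aP a σ (s, ξ) : ℂ) * u / ((bP a σ (s, ξ) : ℂ) - u) := by
  have hb := bP_pos (ξ := ξ) ha hσ hs
  have hE := ex_pos ha hs
  set b := bP a σ (s, ξ) with hbd
  have hz : (b : ℂ) - u ≠ 0 := by
    intro h
    have := congrArg Complex.re h
    simp at this; linarith
  have hb' : (b : ℂ) ≠ 0 := by exact_mod_cast hb.ne'
  have c1 : ((σ : ℂ)^2 / (2 * a)) * (1 - Complex.exp (-(a : ℂ) * s)) = (b : ℂ)⁻¹ := by
    have : σ ^ 2 / (2 * a) * (1 - Real.exp (-a * s)) = b⁻¹ := by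
      rw [hbd, bP, neg_mul, Real.exp_neg]
      field_simp
    rw [← Complex.ofReal_inv, ← this]; push_cast; rfl
  have c2 : (aP a σ (s, ξ) : ℂ) = ξ * Complex.exp (-(a : ℂ) * s) * b := by
    have : aP a σ (s, ξ) = ξ * Real.exp (-a * s) * b := by
      rw [hbd, bP, aP, neg_mul, Real.exp_neg]
      field_simp
    rw [this]; push_cast; rfl
  rw [c1, c2]
  have : 1 - (b : ℂ)⁻¹ * u = ((b : ℂ) - u) / b := by field_simp
  rw [this]
  field_simp

lemma re_neg {b : ℝ} (hb : 0 < b) (u : ℂ) (hu : u.re ≤ 0) (h0 : u ≠ 0) :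
    (u / ((b : ℂ) - u)).re < 0 := by
  have hz : (b : ℂ) - u ≠ 0 := by
    intro h
    have := congrArg Complex.re h
    simp at this; linarith
  have hn := Complex.normSq_pos.mpr hz
  have hn0 := Complex.normSq_pos.mpr h0
  rw [Complex.div_re, ← add_div]
  apply div_neg_of_neg_of_pos _ hn
  rw [Complex.normSq_apply] at hn0
  simp
  nlinarith

/-- If `ν` has infinite mass on `[1/2,∞)`, the inner integral takes its default value. -/
lemma degenerate (a σ : ℝ) (ha : 0 < a) (hσ : 0 < σ) (ν : Measure ℝ)
    (h2 : ν (Set.Ici (1 / 2 : ℝ)) = ⊤) (s : ℝ) (hs : 0 < s) (u : ℂ) (hu : u.re ≤ 0) :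
    ∫ ξ in Set.Ioi (0 : ℝ),
            (Complex.exp ((ξ : ℂ) * u * Complex.exp (-(a : ℂ) * s) /
                (1 - ((σ : ℂ)^2 / (2 * a)) * (1 - Complex.exp (-(a : ℂ) * s)) * u)) - 1)
              ∂ν = 0 := by
  by_cases h0 : u = 0
  · simp [h0]
  apply integral_undef
  intro hI
  simp_rw [expo a σ ha hσ hs u hu] at hI
  have hI2 : IntegrableOn _ (Set.Ici (1 / 2 : ℝ)) ν := IntegrableOn.mono_set hI
    (fun x (hx : 1 / 2 ≤ x) => show (0:ℝ) < x by linarith)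
  set b := bP a σ (s, 1) with hb
  have hbp : 0 < b := bP_pos ha hσ hs
  have hk : 0 < aP a σ (s, 1) := aP_pos ha hσ hs one_pos
  set k := aP a σ (s, 1) with hkd
  have hr := re_neg hbp u hu h0
  set r := (u / ((b : ℂ) - u)).re with hrd
  have hd : 0 < 1 - Real.exp (k * r / 2) := by
    have : k * r / 2 < 0 := by nlinarith
    have := Real.exp_lt_exp.mpr this
    rw [Real.exp_zero] at this
    linarith
  have hc : IntegrableOn (fun _ : ℝ => 1 - Real.exp (k * r / 2)) (Set.Ici (1 / 2 : ℝ)) ν := by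
    refine Integrable.mono hI2 (by fun_prop) ?_
    refine (ae_restrict_mem measurableSet_Ici).mono fun x hx => ?_
    have hx : 1 / 2 ≤ x := hx
    have e1 : bP a σ (s, x) = b := rfl
    have e2 : aP a σ (s, x) = x * k := by rw [hkd]; unfold aP; ring
    rw [Real.norm_of_nonneg hd.le, e1, e2, norm_sub_rev]
    refine le_trans ?_ (norm_sub_norm_le _ _)
    rw [norm_one, Complex.norm_exp]
    have : ((((x * k : ℝ) : ℂ)) * u / ((b : ℂ) - u)).re = x * k * r := by
      rw [mul_div_assoc, Complex.re_ofReal_mul]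
    rw [this]
    have : x * k * r ≤ k * r / 2 := by nlinarith [mul_neg_of_pos_of_neg hk hr]
    have := Real.exp_le_exp.mpr this
    linarith
  rw [integrableOn_const_iff (by simp)] at hc
  rcases hc with h | h
  · exact hd.ne' (by simpa using h)
  · exact h.ne h2

lemma ae_pos (ν : Measure ℝ) [SFinite (ν.restrict (Set.Ioi 0))] (t : ℝ) :
    ∀ᵐ p ∂((volume.restrict (Set.Ioo 0 t)).prod (ν.restrict (Set.Ioi 0))), 0 < p.1 ∧ 0 < p.2 := by
  have b1 := (Measure.quasiMeasurePreserving_fst (μ := volume.restrict (Set.Ioo 0 t))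
    (ν := ν.restrict (Set.Ioi 0))).ae (ae_restrict_mem measurableSet_Ioo)
  have b2 := (Measure.quasiMeasurePreserving_snd (μ := volume.restrict (Set.Ioo 0 t))
    (ν := ν.restrict (Set.Ioi 0))).ae (ae_restrict_mem measurableSet_Ioi)
  filter_upwards [b1, b2] with p h1 h2
  exact ⟨h1.1, h2⟩

lemma jump_measure (a σ : ℝ) (ha : 0 < a) (hσ : 0 < σ) (ν : Measure ℝ)
    (hw : ∫⁻ ξ in Set.Ioi (0:ℝ), wt ξ ∂ν < ⊤) (t : ℝ) (ht : 0 < t) :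
    ∃ M : Measure ℝ, IsFiniteMeasure M ∧ M (Set.Iio 0) = 0 ∧ ∀ u : ℂ, u.re ≤ 0 →
      ∫ s in Set.Ioo (0 : ℝ) t, ∫ ξ in Set.Ioi (0 : ℝ),
            (Complex.exp ((ξ : ℂ) * u * Complex.exp (-(a : ℂ) * s) /
                (1 - ((σ : ℂ)^2 / (2 * a)) * (1 - Complex.exp (-(a : ℂ) * s)) * u)) - 1)
              ∂ν = (∫ x : ℝ, Complex.exp (u * x) ∂M) - M.real Set.univ := by
  have hsf := sf ν hw
  set P := (volume.restrict (Set.Ioo 0 t)).prod (ν.restrict (Set.Ioi 0)) with hP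
  have hPpos : ∀ᵐ p ∂P, 0 < p.1 ∧ 0 < p.2 := ae_pos ν t
  have ham := aP_meas a σ
  have hbm := bP_meas a σ
  let Dd : (ℝ × ℝ) × (ℕ × ℝ) → ℝ := fun p => bD (aP a σ p.1) (bP a σ p.1) p.2
  have hDm : Measurable Dd := bD_meas_joint ham hbm
  have hQ1 := (Measure.quasiMeasurePreserving_fst (μ := P) (ν := bQ)).ae hPpos
  have hQ2 := (Measure.quasiMeasurePreserving_snd (μ := P) (ν := bQ)).ae bQ_pos
  have hDn : ∀ᵐ p ∂(P.prod bQ), 0 ≤ Dd p := by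
    filter_upwards [hQ1, hQ2] with p h1 h2
    exact bD_nonneg (aP_pos ha hσ h1.1 h1.2).le (bP_pos ha hσ h1.1) h2
  set W := (P.prod bQ).withDensity (fun p => ENNReal.ofReal (Dd p)) with hW
  have hmass : ∫⁻ p, ENNReal.ofReal (Dd p) ∂(P.prod bQ) < ⊤ := by
    rw [lintegral_prod _ (by fun_prop)]
    have e : ∫⁻ p, ∫⁻ q, ENNReal.ofReal (Dd (p, q)) ∂bQ ∂P
        = ∫⁻ p, ENNReal.ofReal (1 - Real.exp (-aP a σ p)) ∂P := by
      refine lintegral_congr_ae ?_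
      filter_upwards [hPpos] with p hp
      exact bmass _ _ (aP_pos ha hσ hp.1 hp.2).le (bP_pos ha hσ hp.1)
    rw [e, hP, lintegral_prod_symm _ (by fun_prop)]
    obtain ⟨K, hK⟩ := est a σ ha hσ t ht
    calc _ ≤ ∫⁻ ξ in Set.Ioi (0:ℝ), ENNReal.ofReal K * wt ξ ∂ν :=
          setLIntegral_mono' measurableSet_Ioi fun ξ hξ => hK ξ hξ
      _ = ENNReal.ofReal K * ∫⁻ ξ in Set.Ioi (0:ℝ), wt ξ ∂ν := lintegral_const_mul _ wt_meas
      _ < ⊤ := ENNReal.mul_lt_top ENNReal.ofReal_lt_top hw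
  have hWf : IsFiniteMeasure W := isFiniteMeasure_withDensity hmass.ne
  have hsm : Measurable (fun p : (ℝ × ℝ) × (ℕ × ℝ) => p.2.2) := by fun_prop
  set M := W.map (fun p => p.2.2) with hM
  have hMf : IsFiniteMeasure M := by rw [hM]; infer_instance
  have hM0 : M (Set.Iio 0) = 0 := by
    rw [hM, Measure.map_apply hsm measurableSet_Iio]
    have : ∀ᵐ p ∂W, 0 < p.2.2 := (withDensity_absolutelyContinuous _ _).ae_le hQ2
    rw [ae_iff] at this
    refine measure_mono_null ?_ this
    intro p hp
    exact not_lt.mpr (le_of_lt hp)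
  refine ⟨M, hMf, hM0, ?_⟩
  have main : ∀ u : ℂ, u.re ≤ 0 →
      Integrable (fun p : ℝ × ℝ => Complex.exp (aP a σ p * u / (bP a σ p - u))
        - Complex.exp (-aP a σ p)) P ∧
      ∫ x : ℝ, Complex.exp (u * x) ∂M = ∫ p, (Complex.exp (aP a σ p * u / (bP a σ p - u))
        - Complex.exp (-aP a σ p)) ∂P := by
    intro u hu
    have hi := int_exp M hM0 u hu
    have hiW : Integrable (fun p : (ℝ × ℝ) × (ℕ × ℝ) => Complex.exp (u * p.2.2)) W :=
      (integrable_map_measure hi.1 hsm.aemeasurable).mp hi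
    rw [hW, integrable_withDensity_iff_integrable_smul' (by fun_prop)
      (Filter.Eventually.of_forall fun _ => ENNReal.ofReal_lt_top)] at hiW
    have hcongr : (fun p : (ℝ × ℝ) × (ℕ × ℝ) =>
        (ENNReal.ofReal (Dd p)).toReal • Complex.exp (u * p.2.2)) =ᵐ[P.prod bQ]
        fun p => (Dd p : ℂ) * Complex.exp (u * p.2.2) := by
      filter_upwards [hDn] with p hp
      rw [ENNReal.toReal_ofReal hp, Complex.real_smul]
    have hiQ := hiW.congr hcongr
    have hin : (fun p => ∫ q, (Dd (p, q) : ℂ) * Complex.exp (u * q.2) ∂bQ) =ᵐ[P]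
        fun p => Complex.exp (aP a σ p * u / (bP a σ p - u)) - Complex.exp (-aP a σ p) := by
      filter_upwards [hPpos] with p hp
      exact bint _ _ (aP_pos ha hσ hp.1 hp.2).le (bP_pos ha hσ hp.1) u hu
    refine ⟨hiQ.integral_prod_left.congr hin, ?_⟩
    rw [hM, integral_map hsm.aemeasurable hi.1, hW,
      integral_withDensity_eq_integral_toReal_smul (by fun_prop)
      (Filter.Eventually.of_forall fun _ => ENNReal.ofReal_lt_top), integral_congr_ae hcongr,
      integral_prod _ hiQ, integral_congr_ae hin]
  intro u hu
  obtain ⟨i1, e1⟩ := main u hu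
  obtain ⟨i0, e0⟩ := main 0 (by simp)
  have e0' : (M.real Set.univ : ℂ) = ∫ x : ℝ, Complex.exp (0 * x) ∂M := by simp
  rw [e0', e0, e1, ← integral_sub i1 i0]
  have hint := i1.sub i0
  have hc : (fun p : ℝ × ℝ => Complex.exp (aP a σ p * u / (bP a σ p - u)) - Complex.exp (-aP a σ p)
      - (Complex.exp (aP a σ p * 0 / (bP a σ p - 0)) - Complex.exp (-aP a σ p))) =ᵐ[P]
      fun p => Complex.exp ((p.2 : ℂ) * u * Complex.exp (-(a : ℂ) * p.1) /
                (1 - ((σ : ℂ)^2 / (2 * a)) * (1 - Complex.exp (-(a : ℂ) * p.1)) * u)) - 1 := by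
    filter_upwards [hPpos] with p hp
    rw [expo a σ ha hσ hp.1 u hu]
    simp
  have hint' := hint.congr hc
  rw [integral_congr_ae hc, hP, integral_prod _ hint']

/-- Under `∫_{(0,1)} ξ ln(1/ξ) ν(dξ) < ∞` and `ν((1,∞)) < ∞`, the function
`u ↦ exp(∫₀^t ∫_{(0,∞)} (exp(ξ u e^{-as}/(1 - (σ²/(2a))(1-e^{-as})u)) - 1) ν(dξ) ds)` on
`{Re u ≤ 0}` equals `exp(λ(ρ̂(u)-1))` for a finite `λ ≥ 0` and a probability measure `ρ` on
`[0,∞)`; in particular it is the transform of a compound Poisson distribution, which assigns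
mass `e^{-λ} > 0` to `{0}`. -/
theorem transform_compound_poisson (a σ : ℝ) (ha : 0 < a) (hσ : 0 < σ)
    (ν : Measure ℝ)
    (hν0 : ν (Set.Iic (0 : ℝ)) = 0)
    (hν1 : ∫⁻ ξ in Set.Ioo (0 : ℝ) 1, ENNReal.ofReal (ξ * Real.log (1 / ξ)) ∂ν < ⊤)
    (hν2 : ν (Set.Ioi (1 : ℝ)) < ⊤)
    (t : ℝ) (ht : 0 < t) :
    ∃ lam : ℝ, 0 ≤ lam ∧ ∃ ρ : Measure ℝ, IsProbabilityMeasure ρ ∧ ρ (Set.Iio (0 : ℝ)) = 0 ∧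
      (∀ u : ℂ, u.re ≤ 0 →
        Complex.exp (∫ s in Set.Ioo (0 : ℝ) t, ∫ ξ in Set.Ioi (0 : ℝ),
            (Complex.exp ((ξ : ℂ) * u * Complex.exp (-(a : ℂ) * s) /
                (1 - ((σ : ℂ)^2 / (2 * a)) * (1 - Complex.exp (-(a : ℂ) * s)) * u)) - 1)
              ∂ν) =
          Complex.exp ((lam : ℂ) * ((∫ x : ℝ, Complex.exp (u * x) ∂ρ) - 1))) ∧
      ∃ μcp : Measure ℝ, IsProbabilityMeasure μcp ∧
        (∀ u : ℂ, u.re ≤ 0 →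
          ∫ x : ℝ, Complex.exp (u * x) ∂μcp =
            Complex.exp ((lam : ℂ) * ((∫ x : ℝ, Complex.exp (u * x) ∂ρ) - 1))) ∧
        μcp {0} ≥ ENNReal.ofReal (Real.exp (-lam)) := by
  rcases eq_or_ne (ν (Set.Ici (1 / 2 : ℝ))) ⊤ with h2 | h2
  · refine ⟨0, le_rfl, Measure.dirac 0, inferInstance, by simp, fun u hu => ?_,
      cp_exists 0 le_rfl (Measure.dirac 0) (by simp)⟩
    rw [setIntegral_congr_fun (g := fun _ => (0:ℂ)) measurableSet_Ioo
      (fun s hs => degenerate a σ ha hσ ν h2 s hs.1 u hu)]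
    simp
  · obtain ⟨M, hMf, hM0, hM⟩ := jump_measure a σ ha hσ ν
      (wt_fin ν hν1 (lt_top_iff_ne_top.mpr h2)) t ht
    set m := M.real Set.univ with hm
    have hm0 : 0 ≤ m := measureReal_nonneg
    have hl : 0 < m + 1 := by linarith
    let ρ : Measure ℝ := ENNReal.ofReal (m + 1)⁻¹ • (M + Measure.dirac 0)
    have hρ : IsProbabilityMeasure ρ := by
      constructor
      have : M Set.univ = ENNReal.ofReal m := by rw [hm, ofReal_measureReal]
      simp only [ρ, Measure.smul_apply, Measure.add_apply, this, measure_univ, smul_eq_mul]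
      rw [← ENNReal.ofReal_one, ← ENNReal.ofReal_add hm0 zero_le_one,
        ← ENNReal.ofReal_mul (by positivity), inv_mul_cancel₀ hl.ne']
    have hρ0 : ρ (Set.Iio 0) = 0 := by simp [ρ, hM0]
    refine ⟨m + 1, hl.le, ρ, hρ, hρ0, fun u hu => ?_, cp_exists (m + 1) hl.le ρ hρ0⟩
    rw [hM u hu]
    congr 1
    have : ∫ x : ℝ, Complex.exp (u * x) ∂ρ
        = ((m + 1 : ℝ) : ℂ)⁻¹ * ((∫ x : ℝ, Complex.exp (u * x) ∂M) + 1) := by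
      simp only [ρ]
      rw [integral_smul_measure, integral_add_measure (int_exp M hM0 u hu)
        (int_exp _ (by simp) u hu), ENNReal.toReal_ofReal (by positivity)]
      simp
      ring
    rw [this, mul_sub, ← mul_assoc, mul_inv_cancel₀ (by exact_mod_cast hl.ne')]
    push_cast
    ring
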